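/- Let β_{ij} be any n×n matrix (two-tensor) and let N be a unit vector in ℝⁿ; set q^{ij} = δ^{ij} − N^iN^j. Then δ^{ij}δ^{kl}β_{ki}β_{lj} ≤ C_n(δ^{ij}q^{kl}β_{ki}β_{lj} + |β̂|² + (tr β)²), where β̂_{ij} = β_{ij} − β_{ji} is the antisymmetric part, tr β = δ^{ij}β_{ij}, and C_n depends only on n. In particular, for β symmetric and traceless, (N^iN^kβ_{ki})² = (q^{ik}β_{ki})² ≤ n q^{ij}q^{kl}β_{ki}β_{lj}. -/

import Mathlib

noncomputable section

open Finset

section ProjectionLemmas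

variable {ι : Type*} [Fintype ι]

/-- The form `q = δ - N ⊗ N` of a unit vector `N` is the Euclidean product of the projections to
the orthogonal complement of `N`. -/
lemma sum_tangential_form [DecidableEq ι] {N : ι → ℝ} (hN : ∑ i, N i ^ 2 = 1) (x y : ι → ℝ) :
    ∑ k, ∑ l, ((if k = l then (1:ℝ) else 0) - N k * N l) * x k * y l
      = ∑ k, (x k - N k * ∑ j, N j * x j) * (y k - N k * ∑ j, N j * y j) := by
  have hL : ∑ k, ∑ l, ((if k = l then (1:ℝ) else 0) - N k * N l) * x k * y l
      = ∑ k, x k * y k - (∑ j, N j * x j) * ∑ j, N j * y j := by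
    rw [sum_mul_sum, ← sum_sub_distrib]
    refine sum_congr rfl fun k _ => ?_
    have hk : x k * y k = ∑ l, (if k = l then (1:ℝ) else 0) * x k * y l := by simp
    rw [hk, ← sum_sub_distrib]
    exact sum_congr rfl fun l _ => by ring
  rw [hL]
  set a := ∑ j, N j * x j with ha
  set b := ∑ j, N j * y j with hb
  have hR : ∑ k, (x k - N k * a) * (y k - N k * b)
      = ∑ k, x k * y k - b * ∑ k, N k * x k - a * ∑ k, N k * y k + a * b * ∑ k, N k ^ 2 := by
    simp only [mul_sum, ← sum_sub_distrib, ← sum_add_distrib]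
    exact sum_congr rfl fun k _ => by ring
  rw [hR, ← ha, ← hb, hN]
  ring

lemma sq_trace_le_card_mul_sum_sq (P : ι → ι → ℝ) :
    (∑ i, P i i) ^ 2 ≤ Fintype.card ι * ∑ i, ∑ k, P k i ^ 2 := by
  refine (sq_sum_le_card_mul_sum_sq (s := univ) (f := fun i => P i i)).trans ?_
  rw [card_univ]
  gcongr with i
  exact single_le_sum (f := fun k => P k i ^ 2) (fun k _ => sq_nonneg _) (mem_univ i)

/-- Contraction with a unit vector does not increase the Euclidean norm of a two-tensor. -/
lemma sum_sq_contraction_le {N : ι → ℝ} (hN : ∑ i, N i ^ 2 = 1) (P : ι → ι → ℝ) :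
    ∑ i, (∑ k, N k * P k i) ^ 2 ≤ ∑ i, ∑ k, P k i ^ 2 := by
  refine sum_le_sum fun i _ => ?_
  simpa [hN] using sum_mul_sq_le_sq_mul_sq univ N (fun k => P k i)

/-- The double projection of a two-tensor has the square norm `q^{ij} q^{kl} β_{ki} β_{lj}`. -/
lemma sum_tangential_form_tensor [DecidableEq ι] {N : ι → ℝ} (hN : ∑ i, N i ^ 2 = 1)
    (β : ι → ι → ℝ) :
    ∑ i, ∑ j, ∑ k, ∑ l, ((if i = j then (1:ℝ) else 0) - N i * N j)
        * ((if k = l then (1:ℝ) else 0) - N k * N l) * β k i * β l j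
      = ∑ i, ∑ k, (β k i - N k * (∑ m, N m * β m i)
          - N i * ∑ j, N j * (β k j - N k * ∑ m, N m * β m j)) ^ 2 := by
  set γ : ι → ι → ℝ := fun k i => β k i - N k * ∑ m, N m * β m i with hγ
  have hinner (i j : ι) : ∑ k, ∑ l, ((if i = j then (1:ℝ) else 0) - N i * N j)
        * ((if k = l then (1:ℝ) else 0) - N k * N l) * β k i * β l j
      = ∑ k, ((if i = j then (1:ℝ) else 0) - N i * N j) * γ k i * γ k j := by
    simp only [mul_assoc, ← mul_sum]
    congr 1
    simpa only [mul_assoc] using sum_tangential_form hN (fun k => β k i) (fun k => β k j)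
  simp only [hinner]
  rw [sum_congr rfl fun i _ => sum_comm, sum_comm, sum_comm (f := fun i k => (_ : ℝ) ^ 2)]
  refine sum_congr rfl fun k _ => ?_
  rw [sum_tangential_form hN (γ k) (γ k)]
  exact sum_congr rfl fun i _ => (sq _).symm

lemma sum_tangential_trace [DecidableEq ι] (N : ι → ℝ) (β : ι → ι → ℝ) :
    ∑ i, ∑ k, ((if i = k then (1:ℝ) else 0) - N i * N k) * β k i
      = ∑ i, β i i - ∑ i, ∑ k, N i * N k * β k i := by
  rw [← sum_sub_distrib]
  refine sum_congr rfl fun i _ => ?_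
  simp [sub_mul, sum_sub_distrib]

lemma sum_mul_contraction (N : ι → ℝ) (β : ι → ι → ℝ) :
    ∑ i, N i * ∑ k, N k * β k i = ∑ i, ∑ k, N i * N k * β k i := by
  simp only [mul_sum, mul_assoc]

lemma sum_sq_le_tangential [DecidableEq ι] {N : ι → ℝ} (hN : ∑ i, N i ^ 2 = 1) (β : ι → ι → ℝ) :
    ∑ i, ∑ k, β k i ^ 2 ≤ (7 + 6 * Fintype.card ι) *
      ((∑ i, ∑ k, ∑ l, ((if k = l then (1:ℝ) else 0) - N k * N l) * β k i * β l i)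
        + (∑ i, ∑ k, (β k i - β i k) ^ 2) + (∑ i, β i i) ^ 2) := by
  set v : ι → ℝ := fun i => ∑ k, N k * β k i with hv
  set w : ι → ℝ := fun k => ∑ i, N i * β k i with hw
  set s : ℝ := ∑ i, N i * v i with hs
  set γ : ι → ι → ℝ := fun k i => β k i - N k * v i with hγ
  set A := ∑ i, ∑ k, (β k i - β i k) ^ 2 with hA
  set t := ∑ i, β i i with ht
  have hT : ∑ i, ∑ k, ∑ l, ((if k = l then (1:ℝ) else 0) - N k * N l) * β k i * β l i
      = ∑ i, ∑ k, γ k i ^ 2 := by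
    refine sum_congr rfl fun i _ => ?_
    rw [sum_tangential_form hN (fun k => β k i) (fun k => β k i)]
    exact sum_congr rfl fun k _ => (sq _).symm
  rw [hT]
  set T := ∑ i, ∑ k, γ k i ^ 2 with hTdef
  have hβ : ∑ i, ∑ k, β k i ^ 2 = T + ∑ i, v i ^ 2 := by
    rw [hTdef, ← sum_add_distrib]
    refine sum_congr rfl fun i _ => ?_
    have h : ∑ k, γ k i ^ 2
        = ∑ k, β k i ^ 2 - 2 * v i * ∑ k, N k * β k i + v i ^ 2 * ∑ k, N k ^ 2 := by
      simp only [mul_sum, ← sum_sub_distrib, ← sum_add_distrib]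
      exact sum_congr rfl fun k _ => by simp only [hγ]; ring
    rw [h, hN]
    change _ = _ - 2 * v i * v i + _ + _
    ring
  have hvw : ∑ i, (v i - w i) ^ 2 ≤ A := by
    refine le_of_eq_of_le ?_ (sum_sq_contraction_le hN fun k i => β k i - β i k)
    simp only [hv, hw, mul_sub, sum_sub_distrib]
  have hws : ∑ k, (w k - N k * s) ^ 2 ≤ T := by
    rw [hTdef, sum_comm]
    refine le_of_eq_of_le ?_ (sum_sq_contraction_le hN fun i k => γ k i)
    refine sum_congr rfl fun k _ => ?_
    simp only [hγ, hw, hs, mul_sub, sum_sub_distrib, mul_sum, mul_left_comm]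
  have hsT : (t - s) ^ 2 ≤ Fintype.card ι * T := by
    refine le_of_eq_of_le ?_ (sq_trace_le_card_mul_sum_sq γ)
    simp only [hγ, ht, hs, sum_sub_distrib]
  have hv3 : ∑ i, v i ^ 2 ≤ 3 * (∑ i, (v i - w i) ^ 2 + ∑ i, (w i - N i * s) ^ 2 + s ^ 2) := by
    have h : s ^ 2 = ∑ i, (N i * s) ^ 2 := by simp only [mul_pow, ← sum_mul, hN, one_mul]
    rw [h, ← sum_add_distrib, ← sum_add_distrib, mul_sum]
    refine sum_le_sum fun i _ => ?_
    nlinarith [sq_nonneg (v i - w i - (w i - N i * s)), sq_nonneg (v i - w i - N i * s),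
      sq_nonneg (w i - N i * s - N i * s)]
  have hs2 : s ^ 2 ≤ 2 * t ^ 2 + 2 * (t - s) ^ 2 := by nlinarith [sq_nonneg (2 * t - s)]
  have hA0 : 0 ≤ A := by positivity
  have hT0 : 0 ≤ T := by positivity
  have hn : (0:ℝ) ≤ Fintype.card ι := by positivity
  rw [hβ]
  nlinarith [mul_nonneg hn hA0, mul_nonneg hn (sq_nonneg t), sq_nonneg t]

lemma sq_normal_le_tangential [DecidableEq ι] {N : ι → ℝ} (hN : ∑ i, N i ^ 2 = 1)
    (β : ι → ι → ℝ) (htr : ∑ i, β i i = 0) :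
    (∑ i, ∑ k, N i * N k * β k i) ^ 2 ≤ Fintype.card ι * ∑ i, ∑ j, ∑ k, ∑ l,
      ((if i = j then (1:ℝ) else 0) - N i * N j)
        * ((if k = l then (1:ℝ) else 0) - N k * N l) * β k i * β l j := by
  rw [sum_tangential_form_tensor hN]
  refine le_of_eq_of_le ?_ (sq_trace_le_card_mul_sum_sq _)
  have hnormal : ∑ i, N i * ∑ j, N j * (β i j - N i * ∑ m, N m * β m j) = 0 := by
    have h (u : ι → ℝ) : ∑ i, N i * ∑ j, N j * (β i j - N i * u j)
        = ∑ j, N j * ((∑ i, N i * β i j) - (∑ i, N i ^ 2) * u j) := by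
      rw [sum_congr rfl fun i _ => mul_sum _ _ _, sum_comm]
      refine sum_congr rfl fun j _ => ?_
      rw [sum_mul, ← sum_sub_distrib, mul_sum]
      exact sum_congr rfl fun i _ => by ring
    rw [h, hN]
    simp
  rw [sum_sub_distrib, sum_sub_distrib, hnormal, htr, sum_mul_contraction]
  ring

end ProjectionLemmas

/-- (11.2) and its consequence.  For any two-tensor `β` and unit vector
`N`, with `q^{ij} = δ^{ij} − N^i N^j`:
`δ^{ij}δ^{kl}β_{ki}β_{lj} ≤ C_n (δ^{ij}q^{kl}β_{ki}β_{lj} + |β̂|² + (tr β)²)`,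
and for symmetric traceless `β`,
`(N^iN^kβ_{ki})² = (q^{ik}β_{ki})² ≤ n q^{ij}q^{kl}β_{ki}β_{lj}`. -/
theorem tensor_tangential_inequality (n : ℕ) :
    (∃ C > (0:ℝ), ∀ (β : Matrix (Fin n) (Fin n) ℝ) (N : Fin n → ℝ),
      (∑ i, N i ^ 2) = 1 →
      (∑ i, ∑ k, (β k i) ^ 2)
        ≤ C * ((∑ i, ∑ k, ∑ l,
              ((if k = l then (1:ℝ) else 0) - N k * N l) * β k i * β l i)
            + (∑ i, ∑ k, (β k i - β i k) ^ 2) + (∑ i, β i i) ^ 2)) ∧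
    ∀ (β : Matrix (Fin n) (Fin n) ℝ) (N : Fin n → ℝ),
      (∑ i, N i ^ 2) = 1 →
      (∀ i j, β i j = β j i) → (∑ i, β i i) = 0 →
      (∑ i, ∑ k, N i * N k * β k i) ^ 2
          = (∑ i, ∑ k, ((if i = k then (1:ℝ) else 0) - N i * N k) * β k i) ^ 2 ∧
      (∑ i, ∑ k, N i * N k * β k i) ^ 2
          ≤ n * ∑ i, ∑ j, ∑ k, ∑ l,
              ((if i = j then (1:ℝ) else 0) - N i * N j)
                * ((if k = l then (1:ℝ) else 0) - N k * N l) * β k i * β l j := by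
  refine ⟨⟨7 + 6 * n, by positivity, fun β N hN => ?_⟩, fun β N hN _ htr => ⟨?_, ?_⟩⟩
  · simpa only [Fintype.card_fin] using sum_sq_le_tangential hN β
  · rw [sum_tangential_trace N β, htr]
    ring
  · simpa only [Fintype.card_fin] using sq_normal_le_tangential hN β htr

end
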